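/- Let α∈(0,1/2] and let F satisfy the regular right tail condition (with exponent α). Suppose there is a non-decreasing M∈ℛ_β with β∈[1−2α,1] such that, as x→∞, ω(x)≪x/M(x) and x/M(x)=o(ℓ(x)²). Let g₀(x)=ℓ(x)·√(M(x)/x). If there is γ>α+β such that g₀(x)≫(ln x)^γ, then for every θ>0 and every non-decreasing L∈ℛ with L(x)≪g₀(x)/(ln x)^γ, one has lim_{x→∞} (x/ℓ(x))·∑_{n<L(x)} sup_{t≥θx} F^{*n}((t,t+h]) = 0. -/

import Mathlib

open MeasureTheory Filter Set Real Asymptotics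

attribute [local instance] Classical.propDecidable

noncomputable section

namespace SRT

/-- Convolution of two measures on `ℝ`. -/
def mconv (μ ν : Measure ℝ) : Measure ℝ := μ.bind fun x => ν.map fun y => x + y

/-- `n`-fold self-convolution of `μ`, with the 0-th power the unit mass at `0`. -/
def convPow (μ : Measure ℝ) : ℕ → Measure ℝ
  | 0 => Measure.dirac 0
  | n + 1 => mconv (convPow μ n) μ

/-- The renewal measure `U = ∑ₙ F^{*n}`. -/
def renewal (μ : Measure ℝ) : Measure ℝ := Measure.sum fun n => convPow μ n

/-- Right tail `F̄(x) = μ((x,∞))`. -/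
def rtail (μ : Measure ℝ) (x : ℝ) : ℝ := (μ (Set.Ioi x)).toReal

/-- `f` is strictly positive on `(0,∞)` and regularly varying at `∞` with exponent `β`. -/
def RegVary (f : ℝ → ℝ) (β : ℝ) : Prop :=
  (∀ x > 0, 0 < f x) ∧
    ∀ c > 0, Tendsto (fun x => f (c * x) / f x) atTop (nhds (c ^ β))

/-- `f` is regularly varying at `∞` with some exponent. -/
def RegVaryAny (f : ℝ → ℝ) : Prop := ∃ β : ℝ, RegVary f β

/-- Regular right tail condition: `F̄(x) ∼ 1/ℓ(x)` as `x → ∞`. -/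
def RightTail (μ : Measure ℝ) (ℓ : ℝ → ℝ) : Prop :=
  Tendsto (fun x => rtail μ x * ℓ x) atTop (nhds 1)

/-- Converging tail ratio condition: `F(-x)/F̄(x)` converges to a finite limit. -/
def TailRatio (μ : Measure ℝ) : Prop :=
  ∃ p : ℝ, Tendsto (fun x => (μ (Set.Iic (-x))).toReal / rtail μ x) atTop (nhds p)

/-- `μ` is concentrated on `dℤ`. -/
def ConcOn (μ : Measure ℝ) (d : ℝ) : Prop := μ {x : ℝ | ∃ k : ℤ, x = k * d} = 1

/-- `μ` is arithmetic. -/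
def Arith (μ : Measure ℝ) : Prop := ∃ d > 0, ConcOn μ d

/-- `h` is admissible: any positive number if `μ` is non-arithmetic, and
the span of `μ` if `μ` is arithmetic. -/
def SpanOK (μ : Measure ℝ) (h : ℝ) : Prop :=
  0 < h ∧ (¬ Arith μ ∨ (ConcOn μ h ∧ ∀ d > 0, ConcOn μ d → d ≤ h))

/-- `μ` is concentrated on `a + dℤ`. -/
def ConcOnLat (μ : Measure ℝ) (a d : ℝ) : Prop :=
  μ {x : ℝ | ∃ k : ℤ, x = a + k * d} = 1

/-- `μ` is lattice. -/
def IsLattice (μ : Measure ℝ) : Prop := ∃ a d : ℝ, 0 ≤ a ∧ a < d ∧ ConcOnLat μ a d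

/-- `h` is admissible: any positive number if `μ` is non-lattice, and
the span of `μ` if `μ` is lattice. -/
def LatSpanOK (μ : Measure ℝ) (h : ℝ) : Prop :=
  0 < h ∧ (¬ IsLattice μ ∨
    ((∃ a, 0 ≤ a ∧ a < h ∧ ConcOnLat μ a h) ∧
      ∀ a d : ℝ, 0 ≤ a → a < d → ConcOnLat μ a d → d ≤ h))

/-- Generalized inverse `ℓ⁻(x) = inf {t ≥ 1 : ℓ(t) > x}`. -/
def linv (ℓ : ℝ → ℝ) (x : ℝ) : ℝ := sInf {t : ℝ | 1 ≤ t ∧ x < ℓ t}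

/-- `ω(x) = x F((x,x+h]) / F̄(x)`. -/
def omegaFn (μ : Measure ℝ) (h x : ℝ) : ℝ :=
  x * (μ (Set.Ioc x (x + h))).toReal / rtail μ x

/-- `I_η(x,T) = ∫_{(1-η)x}^x (ω(y)-T)⁺ dy`. -/
def Iof (μ : Measure ℝ) (h η x T : ℝ) : ℝ :=
  ∫ y in (1 - η) * x..x, max (omegaFn μ h y - T) 0

/-- `Î_{η,n,r}(x,T) = ∫_{(1-η)x}^x e^{-(x-y)/(r aₙ)} (ω(y)-T)⁺ dy`. -/
def IofHat (μ : Measure ℝ) (ℓ : ℝ → ℝ) (h η : ℝ) (n : ℕ) (r x T : ℝ) : ℝ :=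
  ∫ y in (1 - η) * x..x,
    Real.exp (-(x - y) / (r * linv ℓ (n : ℝ))) * max (omegaFn μ h y - T) 0

/-- `Sₙ/aₙ` converges in distribution to a law with density `g`. -/
def StableLimit (F : Measure ℝ) (ℓ : ℝ → ℝ) (g : ℝ → ℝ) : Prop :=
  ∀ f : BoundedContinuousFunction ℝ ℝ,
    Tendsto (fun n : ℕ =>
        ∫ x, f x ∂((convPow F n).map fun y => y / linv ℓ (n : ℝ))) atTop
      (nhds (∫ x, f x * g x))

/-- `Sₙ/aₙ` converges in distribution to the law `μζ`. -/
def WeakLimit (F : Measure ℝ) (ℓ : ℝ → ℝ) (μζ : Measure ℝ) : Prop :=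
  ∀ f : BoundedContinuousFunction ℝ ℝ,
    Tendsto (fun n : ℕ =>
        ∫ x, f x ∂((convPow F n).map fun y => y / linv ℓ (n : ℝ))) atTop
      (nhds (∫ x, f x ∂μζ))

/-- The law `μ` is stable: for each `n`, the `n`-fold convolution is the law of
`cₙ X + dₙ` for some `cₙ > 0`, `dₙ`. -/
def IsStable (μ : Measure ℝ) : Prop :=
  ∀ n : ℕ, 0 < n → ∃ c : ℝ, 0 < c ∧ ∃ d : ℝ, convPow μ n = μ.map fun x => c * x + d

/-- The strong renewal theorem:
`x F̄(x) U((x,x+h]) → α h ∫₀^∞ t^{-α} g(t) dt`. -/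
def SRTholds (F : Measure ℝ) (h α : ℝ) (g : ℝ → ℝ) : Prop :=
  Tendsto (fun x : ℝ => x * rtail F x * ((renewal F) (Set.Ioc x (x + h))).toReal)
    atTop (nhds (α * h * ∫ t in Set.Ioi (0:ℝ), t ^ (-α) * g t))

variable {Ω : Type*} [MeasurableSpace Ω]

/-- Partial sums `Sₙ = X₁ + ⋯ + Xₙ`. -/
def pSum (X : ℕ → Ω → ℝ) (n : ℕ) (ω : Ω) : ℝ := ∑ i ∈ Finset.range n, X i ω

/-- `X` is an i.i.d. sequence with common law `F` under `P`. -/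
def IIDseq (P : Measure Ω) (F : Measure ℝ) (X : ℕ → Ω → ℝ) : Prop :=
  (∀ i, Measurable (X i)) ∧ (∀ i, P.map (X i) = F) ∧
    ProbabilityTheory.iIndepFun X P

/-- `Nₙ = #{i ≤ n : Xᵢ > 0}`. -/
def Ncount (X : ℕ → Ω → ℝ) (n : ℕ) (ω : Ω) : ℕ :=
  ((Finset.range n).filter fun i => 0 < X i ω).card

/-- `Sₙ⁻ = ∑_{i ≤ n} Xᵢ⁻`. -/
def sMinus (X : ℕ → Ω → ℝ) (n : ℕ) (ω : Ω) : ℝ :=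
  ∑ i ∈ Finset.range n, max (-(X i ω)) 0

/-- The quantity `R_{T,η,r,c₁,c₂}(x,δ)` of Theorem `t:sum-small-n`, with
`xₙ = x + Sₙ⁻` and `κ = ⌊1/α⌋`. -/
def Rquant (F : Measure ℝ) (ℓ : ℝ → ℝ) (h α : ℝ) (P : Measure Ω) (X : ℕ → Ω → ℝ)
    (L : ℝ → ℝ) (T η r c₁ c₂ x δ : ℝ) : ℝ :=
  (x / ℓ x) * ∑ n ∈ Finset.Ico ⌈L x⌉₊ ⌈ℓ (δ * x)⌉₊,
    ∫ ω, ((Ncount X n ω : ℝ) / linv ℓ ((Ncount X n ω : ℕ) : ℝ)) *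
        (rtail F (x + sMinus X n ω) / (x + sMinus X n ω)) *
        sSup ((fun t => IofHat F ℓ h η (Ncount X n ω) r t T) ''
          Set.Icc (c₁ * (x + sMinus X n ω) / (⌊1/α⌋₊ : ℝ))
            (c₂ * (x + sMinus X n ω) + 2 * h)) ∂P

/-- Strict ascending ladder epochs. -/
def ladderTime (X : ℕ → Ω → ℝ) : ℕ → Ω → ℕ
  | 0 => fun _ => 0
  | k + 1 => fun ω =>
      sInf {n : ℕ | ladderTime X k ω < n ∧ pSum X (ladderTime X k ω) ω < pSum X n ω}

/-- Strict ascending ladder heights `H_k`. -/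
def ladderHeight (X : ℕ → Ω → ℝ) (k : ℕ) (ω : Ω) : ℝ := pSum X (ladderTime X k ω) ω

/-- Weak descending ladder epochs (weak ascending epochs of `-S`). -/
def wLadderTimeDesc (X : ℕ → Ω → ℝ) : ℕ → Ω → ℕ
  | 0 => fun _ => 0
  | k + 1 => fun ω =>
      sInf {n : ℕ | wLadderTimeDesc X k ω < n ∧
        pSum X n ω ≤ pSum X (wLadderTimeDesc X k ω) ω}

/-- Weak descending ladder heights (ladder heights of the walk `-S`). -/
def wLadderHeightDesc (X : ℕ → Ω → ℝ) (k : ℕ) (ω : Ω) : ℝ :=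
  - pSum X (wLadderTimeDesc X k ω) ω

/-- `X_{n:k}`, the `k`-th largest among `X₁,…,Xₙ`; by convention `0` if `k > n`. -/
def ordStat (X : ℕ → Ω → ℝ) (n k : ℕ) (ω : Ω) : ℝ :=
  sSup {t : ℝ | k ≤ ((Finset.range n).filter fun i => t ≤ X i ω).card}

/-- `S_{n:k} = X_{n:1} + ⋯ + X_{n:k}`. -/
def topSum (X : ℕ → Ω → ℝ) (n k : ℕ) (ω : Ω) : ℝ :=
  ∑ j ∈ Finset.Icc 1 k, ordStat X n j ω

/-- `ζ_{n,x} = aₙ^{1-γ} x^γ`. -/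
def zetaCut (ℓ : ℝ → ℝ) (γ : ℝ) (n : ℕ) (x : ℝ) : ℝ :=
  (linv ℓ (n : ℝ)) ^ (1 - γ) * x ^ γ

/-- The event `E_{n,k,x} = {Sₙ ∈ (x,x+h], X_{n:k} > ζ_{n,x} ≥ X_{n:k+1}}`,
with the convention `X_{n:0} = ∞`. -/
def Eevent (X : ℕ → Ω → ℝ) (ℓ : ℝ → ℝ) (h γ : ℝ) (n k : ℕ) (x : ℝ) : Set Ω :=
  {ω | pSum X n ω ∈ Set.Ioc x (x + h) ∧
    (k = 0 ∨ zetaCut ℓ γ n x < ordStat X n k ω) ∧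
    ordStat X n (k + 1) ω ≤ zetaCut ℓ γ n x}

end SRT

open SRT

/-- A Potter-type bound for monotone functions whose doubling ratio converges. -/
theorem exists_potter_bound {f : ℝ → ℝ} {a ρ : ℝ} (hmono : MonotoneOn f (Ioi 0))
    (hpos : ∀ x > 0, 0 < f x) (hρ : 0 < ρ) (haρ : a < ρ)
    (hlim : Tendsto (fun x => f (2 * x) / f x) atTop (nhds (2 ^ a))) :
    ∃ C > 0, ∃ X > 0, ∀ y x, X ≤ y → y ≤ x → f x ≤ C * (x / y) ^ ρ * f y := by
  have hlt : (2 : ℝ) ^ a < 2 ^ ρ := Real.rpow_lt_rpow_of_exponent_lt one_lt_two haρ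
  obtain ⟨X, hX⟩ := eventually_atTop.1 (hlim.eventually (gt_mem_nhds hlt))
  refine ⟨2 ^ ρ, by positivity, max X 1, by positivity, fun y x hy hyx => ?_⟩
  have hy0 : 0 < y := lt_of_lt_of_le one_pos ((le_max_right X 1).trans hy)
  have hXy : X ≤ y := (le_max_left X 1).trans hy
  have hiter : ∀ k : ℕ, f (2 ^ k * y) ≤ ((2 : ℝ) ^ k) ^ ρ * f y := by
    intro k
    induction k with
    | zero => simp
    | succ k ih =>
      have h1 : (1 : ℝ) ≤ 2 ^ k := one_le_pow₀ one_le_two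
      have h2 : y ≤ 2 ^ k * y := le_mul_of_one_le_left hy0.le h1
      have h3 := hX (2 ^ k * y) (hXy.trans h2)
      rw [div_lt_iff₀ (hpos _ (by positivity))] at h3
      calc f (2 ^ (k + 1) * y) = f (2 * (2 ^ k * y)) := by ring_nf
        _ ≤ 2 ^ ρ * f (2 ^ k * y) := h3.le
        _ ≤ 2 ^ ρ * (((2 : ℝ) ^ k) ^ ρ * f y) := by gcongr
        _ = ((2 : ℝ) ^ (k + 1)) ^ ρ * f y := by
          rw [pow_succ, Real.mul_rpow (by positivity) (by positivity)]; ring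
  have hr : 1 ≤ x / y := (one_le_div hy0).2 hyx
  obtain ⟨k, hk1, hk2⟩ := exists_nat_pow_near hr one_lt_two
  have hfk := hiter (k + 1)
  calc f x ≤ f (2 ^ (k + 1) * y) :=
        hmono (hy0.trans_le hyx) (show (0 : ℝ) < _ by positivity) ((div_lt_iff₀ hy0).1 hk2).le
    _ ≤ ((2 : ℝ) ^ (k + 1)) ^ ρ * f y := hfk
    _ ≤ (2 * (x / y)) ^ ρ * f y := by
        have := (hpos y hy0).le
        gcongr
        rw [pow_succ]; linarith
    _ = 2 ^ ρ * (x / y) ^ ρ * f y := by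
        rw [Real.mul_rpow (by norm_num) (by positivity)]

theorem lintegral_mconv' (μ ν : Measure ℝ) [SFinite ν] {f : ℝ → ENNReal} (hf : Measurable f) :
    ∫⁻ x, f x ∂(mconv μ ν) = ∫⁻ x, ∫⁻ y, f (x + y) ∂ν ∂μ := by
  have hm : Measurable fun x : ℝ => ν.map fun y => x + y := by
    refine Measure.measurable_of_measurable_coe _ fun s hs => ?_
    have : (fun x : ℝ => ν.map (fun y => x + y) s) =
        fun x => ν (Prod.mk x ⁻¹' ((fun p : ℝ × ℝ => p.1 + p.2) ⁻¹' s)) := by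
      ext x
      rw [Measure.map_apply (measurable_const_add x) hs]; rfl
    rw [this]
    exact measurable_measure_prodMk_left ((measurable_fst.add measurable_snd) hs)
  rw [mconv, Measure.lintegral_bind hm.aemeasurable hf.aemeasurable]
  exact lintegral_congr fun x => lintegral_map hf (measurable_const_add x)

theorem mconv_eq_conv (μ ν : Measure ℝ) [SFinite ν] : mconv μ ν = μ.conv ν := by
  refine Measure.ext_of_lintegral _ fun f hf => ?_
  rw [lintegral_mconv' μ ν hf, Measure.lintegral_conv hf]

instance isProbabilityMeasure_convPow (F : Measure ℝ) [IsProbabilityMeasure F] (n : ℕ) :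
    IsProbabilityMeasure (convPow F n) := by
  induction n with
  | zero => exact Measure.dirac.isProbabilityMeasure
  | succ n ih => rw [convPow, mconv_eq_conv]; infer_instance

theorem lintegral_convPow_succ (F : Measure ℝ) [IsProbabilityMeasure F] (n : ℕ)
    {f : ℝ → ENNReal} (hf : Measurable f) :
    ∫⁻ x, f x ∂(convPow F (n + 1)) = ∫⁻ y, ∫⁻ x, f (x + y) ∂(convPow F n) ∂F := by
  rw [convPow, lintegral_mconv' _ _ hf, lintegral_lintegral_swap]
  exact (hf.comp (measurable_fst.add measurable_snd)).aemeasurable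

/-- Truncation bound: either one summand exceeds `z`, and then it falls in a window of mass at
most `p`, or the exponential Markov inequality applies to the summands truncated at `z`. -/
theorem convPow_Ioc_le (F : Measure ℝ) [IsProbabilityMeasure F] {h z lam : ℝ} (hlam : 0 ≤ lam)
    {p : ENNReal} (hp : ∀ s, F (Ioi z ∩ Ioc s (s + h)) ≤ p) (n : ℕ) (t : ℝ) :
    convPow F n (Ioc t (t + h)) ≤ n * p + ENNReal.ofReal (Real.exp (-(lam * t))) *
      (∫⁻ y in Iic z, ENNReal.ofReal (Real.exp (lam * y)) ∂F) ^ n := by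
  set m := ∫⁻ y in Iic z, ENNReal.ofReal (Real.exp (lam * y)) ∂F with hm
  induction n generalizing t with
  | zero =>
    simp only [convPow, Nat.cast_zero, zero_mul, zero_add, pow_zero, mul_one]
    rcases lt_or_ge t 0 with ht | ht
    · refine prob_le_one.trans ?_
      rw [← ENNReal.ofReal_one]
      refine ENNReal.ofReal_le_ofReal (Real.one_le_exp ?_)
      have := mul_nonpos_of_nonneg_of_nonpos hlam ht.le
      linarith
    · rw [Measure.dirac_apply' _ measurableSet_Ioc, indicator_of_notMem]
      · exact zero_le
      · exact fun hmem => absurd hmem.1 ht.not_gt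
  | succ n ih =>
    have hmeas : Measurable fun q : ℝ × ℝ => (Ioc t (t + h)).indicator (1 : ℝ → ENNReal)
        (q.1 + q.2) :=
      (measurable_one.indicator measurableSet_Ioc).comp (measurable_fst.add measurable_snd)
    have hshift : ∀ x y, (Ioc t (t + h)).indicator (1 : ℝ → ENNReal) (x + y) =
        (Ioc (t - y) (t - y + h)).indicator 1 x := by
      intro x y
      simp only [indicator, mem_Ioc]
      congr 1
      exact propext ⟨fun H => ⟨by linarith [H.1], by linarith [H.2]⟩,
        fun H => ⟨by linarith [H.1], by linarith [H.2]⟩⟩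
    have hsmall : ∫⁻ y in Iic z, ∫⁻ x, (Ioc t (t + h)).indicator (1 : ℝ → ENNReal) (x + y)
        ∂(convPow F n) ∂F ≤ n * p + ENNReal.ofReal (Real.exp (-(lam * t))) * m ^ (n + 1) := by
      calc _ ≤ ∫⁻ y in Iic z, (n * p + ENNReal.ofReal (Real.exp (-(lam * t))) * m ^ n *
              ENNReal.ofReal (Real.exp (lam * y))) ∂F := by
            refine lintegral_mono fun y => ?_
            simp_rw [hshift]
            rw [lintegral_indicator_one measurableSet_Ioc]
            refine (ih (t - y)).trans_eq ?_
            rw [show -(lam * (t - y)) = -(lam * t) + lam * y by ring, Real.exp_add,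
              ENNReal.ofReal_mul (Real.exp_pos _).le]
            ring
        _ = n * p * F (Iic z) + ENNReal.ofReal (Real.exp (-(lam * t))) * m ^ n * m := by
            rw [lintegral_add_left measurable_const, lintegral_const,
              Measure.restrict_apply_univ, lintegral_const_mul _ (by fun_prop)]
        _ ≤ _ := by
            rw [pow_succ, mul_assoc _ (m ^ n)]
            exact add_le_add (mul_le_of_le_one_right zero_le prob_le_one) le_rfl
    have hlarge : ∫⁻ y in Ioi z, ∫⁻ x, (Ioc t (t + h)).indicator (1 : ℝ → ENNReal) (x + y)
        ∂(convPow F n) ∂F ≤ p := by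
      rw [lintegral_lintegral_swap (by
        exact (hmeas.comp measurable_swap).aemeasurable)]
      calc _ ≤ ∫⁻ _, p ∂(convPow F n) := by
            refine lintegral_mono fun x => ?_
            simp_rw [add_comm x, hshift]
            rw [lintegral_indicator_one measurableSet_Ioc,
              Measure.restrict_apply measurableSet_Ioc, inter_comm]
            exact hp _
        _ = p := by simp
    rw [← lintegral_indicator_one measurableSet_Ioc,
      lintegral_convPow_succ F n (measurable_one.indicator measurableSet_Ioc),
      ← lintegral_add_compl _ (measurableSet_Iic (a := z)), compl_Iic]
    refine (add_le_add hsmall hlarge).trans_eq ?_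
    push_cast
    ring

theorem lintegral_exp_Iic_le (F : Measure ℝ) [IsProbabilityMeasure F] {z K : ℝ} (hz : 0 < z)
    (hK : 0 ≤ K) :
    ∫⁻ y in Iic z, ENNReal.ofReal (Real.exp (K / z * y)) ∂F ≤
      1 + ENNReal.ofReal (Real.exp K * (K / z)) *
        ∫⁻ y, ENNReal.ofReal (min (max y 0) z) ∂F := by
  have hpt : ∀ y ≤ z, Real.exp (K / z * y) ≤ 1 + Real.exp K * (K / z) * min (max y 0) z := by
    intro y hy
    have hq : 0 ≤ K / z := by positivity
    rcases le_total y 0 with h0 | h0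
    · rw [max_eq_right h0, min_eq_left hz.le]
      simpa using mul_nonpos_of_nonneg_of_nonpos hq h0
    · rw [max_eq_left h0, min_eq_left hy]
      set u := K / z * y with hu
      have hu0 : 0 ≤ u := by positivity
      have huK : u ≤ K := by
        calc u ≤ K / z * z := by rw [hu]; gcongr
          _ = K := by field_simp
      have h1 : 1 - u ≤ Real.exp (-u) := Real.one_sub_le_exp_neg u
      have h2 : Real.exp u * Real.exp (-u) = 1 := by rw [← Real.exp_add]; simp
      have h3 : Real.exp u ≤ Real.exp K := Real.exp_le_exp.2 huK
      have h4 := mul_le_mul_of_nonneg_left h1 (Real.exp_pos u).le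
      have h5 := mul_le_mul_of_nonneg_right h3 hu0
      have : Real.exp K * (K / z) * y = Real.exp K * u := by rw [hu]; ring
      rw [this]; linarith
  calc ∫⁻ y in Iic z, ENNReal.ofReal (Real.exp (K / z * y)) ∂F
      ≤ ∫⁻ y in Iic z, (1 + ENNReal.ofReal (Real.exp K * (K / z)) *
          ENNReal.ofReal (min (max y 0) z)) ∂F := by
        refine setLIntegral_mono' measurableSet_Iic fun y hy => ?_
        rw [← ENNReal.ofReal_mul (by positivity), ← ENNReal.ofReal_one,
          ← ENNReal.ofReal_add one_pos.le
            (by have : 0 ≤ min (max y 0) z := le_min (le_max_right _ _) hz.le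
                positivity)]
        exact ENNReal.ofReal_le_ofReal (hpt y hy)
    _ ≤ ∫⁻ y, (1 + ENNReal.ofReal (Real.exp K * (K / z)) *
          ENNReal.ofReal (min (max y 0) z)) ∂F := setLIntegral_le_lintegral _ _
    _ = _ := by
        rw [lintegral_add_left measurable_const, lintegral_const_mul _ (by fun_prop)]
        simp

theorem lintegral_min_max_le (F : Measure ℝ) [IsProbabilityMeasure F] {z ρ A : ℝ} (hz : 0 < z)
    (hρ : ρ < 1) (hA : 0 ≤ A) (htail : ∀ y, 0 < y → y ≤ z → rtail F y ≤ A * (z / y) ^ ρ) :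
    ∫⁻ y, ENNReal.ofReal (min (max y 0) z) ∂F ≤ ENNReal.ofReal (A * z / (1 - ρ)) := by
  rw [lintegral_eq_lintegral_meas_lt F (f := fun y => min (max y 0) z)
    (ae_of_all _ fun y => le_min (le_max_right _ _) hz.le) (by fun_prop)]
  calc ∫⁻ t in Ioi (0 : ℝ), F {a | t < min (max a 0) z}
      ≤ ∫⁻ t in Ioi (0 : ℝ), (Ioc 0 z).indicator
          (fun t => ENNReal.ofReal (A * z ^ ρ * t ^ (-ρ))) t := by
        refine setLIntegral_mono' measurableSet_Ioi fun t (ht : 0 < t) => ?_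
        by_cases htz : t ≤ z
        · rw [indicator_of_mem (show t ∈ Ioc 0 z from ⟨ht, htz⟩)]
          have hsub : {a | t < min (max a 0) z} ⊆ Ioi t := by
            intro a ha
            rcases lt_max_iff.1 (lt_min_iff.1 (show t < min (max a 0) z from ha)).1 with h | h
            · exact h
            · exact absurd h ht.not_gt
          refine (measure_mono hsub).trans ?_
          rw [← ENNReal.ofReal_toReal (measure_ne_top F (Ioi t))]
          refine ENNReal.ofReal_le_ofReal ((htail t ht htz).trans_eq ?_)
          rw [Real.div_rpow hz.le ht.le, Real.rpow_neg ht.le]; ring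
        · have : {a | t < min (max a 0) z} = ∅ := by
            ext a; simp only [mem_ofPred_eq, lt_min_iff, mem_empty_iff_false, iff_false]
            exact fun h => htz h.2.le
          rw [this]; simp
    _ = ∫⁻ t in Ioc 0 z, ENNReal.ofReal (A * z ^ ρ * t ^ (-ρ)) := by
        rw [setLIntegral_indicator measurableSet_Ioc,
          inter_eq_left.2 (Ioc_subset_Ioi_self)]
    _ = ENNReal.ofReal (∫ t in Ioc 0 z, A * z ^ ρ * t ^ (-ρ)) := by
        rw [ofReal_integral_eq_lintegral_ofReal]
        · refine Integrable.const_mul ?_ _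
          have := (intervalIntegral.intervalIntegrable_rpow' (a := 0) (b := z)
            (show -1 < -ρ by linarith))
          rwa [intervalIntegrable_iff_integrableOn_Ioc_of_le hz.le] at this
        · refine (ae_restrict_iff' measurableSet_Ioc).2 (ae_of_all _ fun t ht => ?_)
          have := ht.1
          simp only [Pi.zero_apply]
          positivity
    _ = ENNReal.ofReal (A * z / (1 - ρ)) := by
        rw [integral_const_mul, ← intervalIntegral.integral_of_le hz.le,
          integral_rpow (Or.inl (by linarith)), Real.zero_rpow (by linarith),
          show -ρ + 1 = 1 - ρ by ring, sub_zero, mul_div_assoc', mul_assoc, ← Real.rpow_add hz]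
        simp

theorem convPow_Ioc_toReal_le (F : Measure ℝ) [IsProbabilityMeasure F] {h z K ρ A p : ℝ}
    (hz : 0 < z) (hK : 0 ≤ K) (hρ : ρ < 1) (hA : 0 ≤ A) (hp0 : 0 ≤ p)
    (htail : ∀ y, 0 < y → y ≤ z → rtail F y ≤ A * (z / y) ^ ρ)
    (hp : ∀ s, (F (Ioi z ∩ Ioc s (s + h))).toReal ≤ p) (n : ℕ) (t : ℝ) :
    (convPow F n (Ioc t (t + h))).toReal ≤
      n * p + Real.exp (-(K / z * t)) * Real.exp (n * (Real.exp K * K / (1 - ρ) * A)) := by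
  have h1ρ : 0 < 1 - ρ := by linarith
  have hm : ∫⁻ y in Iic z, ENNReal.ofReal (Real.exp (K / z * y)) ∂F ≤
      ENNReal.ofReal (Real.exp (Real.exp K * K / (1 - ρ) * A)) := by
    calc _ ≤ 1 + ENNReal.ofReal (Real.exp K * (K / z)) *
          ENNReal.ofReal (A * z / (1 - ρ)) := by
          refine (lintegral_exp_Iic_le F hz hK).trans ?_
          gcongr
          exact lintegral_min_max_le F hz hρ hA htail
      _ = ENNReal.ofReal (1 + Real.exp K * K / (1 - ρ) * A) := by
          rw [← ENNReal.ofReal_mul (by positivity), ← ENNReal.ofReal_one,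
            ← ENNReal.ofReal_add one_pos.le (by positivity)]
          congr 1
          field_simp
      _ ≤ _ := by
          refine ENNReal.ofReal_le_ofReal ?_
          rw [add_comm]
          exact Real.add_one_le_exp _
  have hbd := convPow_Ioc_le F (h := h) (z := z) (lam := K / z) (by positivity)
    (p := ENNReal.ofReal p)
    (fun s => (ENNReal.le_ofReal_iff_toReal_le (measure_ne_top _ _) hp0).2 (hp s)) n t
  refine ENNReal.toReal_le_of_le_ofReal (by positivity) (hbd.trans ?_)
  rw [ENNReal.ofReal_add (by positivity) (by positivity), ENNReal.ofReal_mul (by positivity),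
    ENNReal.ofReal_natCast, ENNReal.ofReal_mul (Real.exp_pos _).le, Real.exp_nat_mul,
    ENNReal.ofReal_pow (Real.exp_pos _).le]
  gcongr

theorem sum_range_ceil_le {s : ℕ → ℝ} {L p q : ℝ} (hL : 0 ≤ L) (hp : 0 ≤ p) (hq : 0 ≤ q)
    (hs : ∀ n : ℕ, (n : ℝ) < L → s n ≤ n * p + q) :
    ∑ n ∈ Finset.range ⌈L⌉₊, s n ≤ L ^ 2 * p + (L + 1) * q := by
  have hsq : ∀ N : ℕ, (∑ n ∈ Finset.range (N + 1), (n : ℝ)) ≤ (N : ℝ) ^ 2 := by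
    intro N
    induction N with
    | zero => simp
    | succ N ih => rw [Finset.sum_range_succ]; push_cast at ih ⊢; nlinarith
  have hid : (∑ n ∈ Finset.range ⌈L⌉₊, (n : ℝ)) ≤ L ^ 2 := by
    rcases hN : ⌈L⌉₊ with _ | N
    · simpa using sq_nonneg L
    · have : (N : ℝ) < L := Nat.lt_ceil.1 (by omega)
      exact (hsq N).trans (by gcongr)
  calc ∑ n ∈ Finset.range ⌈L⌉₊, s n ≤ ∑ n ∈ Finset.range ⌈L⌉₊, ((n : ℝ) * p + q) :=
        Finset.sum_le_sum fun n hn => hs n (Nat.lt_ceil.1 (Finset.mem_range.1 hn))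
    _ = (∑ n ∈ Finset.range ⌈L⌉₊, (n : ℝ)) * p + ⌈L⌉₊ * q := by
        rw [Finset.sum_add_distrib, Finset.sum_mul]; simp
    _ ≤ L ^ 2 * p + (L + 1) * q := by
        gcongr
        exact (Nat.ceil_lt_add_one hL).le

theorem rtail_antitone (F : Measure ℝ) [IsProbabilityMeasure F] : Antitone (rtail F) :=
  fun _ _ hxy => ENNReal.toReal_mono (measure_ne_top _ _) (measure_mono (Ioi_subset_Ioi hxy))

theorem rtail_le_one (F : Measure ℝ) [IsProbabilityMeasure F] (x : ℝ) : rtail F x ≤ 1 :=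
  ENNReal.toReal_le_of_le_ofReal zero_le_one (by simpa using prob_le_one)

theorem SRT.RightTail.rtail_pos {F : Measure ℝ} [IsProbabilityMeasure F] {ℓ : ℝ → ℝ}
    (hRT : RightTail F ℓ) (x : ℝ) : 0 < rtail F x := by
  obtain ⟨y, hy, hxy⟩ :=
    ((hRT.eventually (lt_mem_nhds (show (0 : ℝ) < 1 by norm_num))).and
      (eventually_ge_atTop x)).exists
  refine lt_of_lt_of_le (lt_of_le_of_ne ENNReal.toReal_nonneg ?_) (rtail_antitone F hxy)
  intro h0
  rw [rtail, ← h0, zero_mul] at hy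
  exact lt_irrefl _ hy

theorem SRT.RightTail.tendsto_inv_rtail_ratio {F : Measure ℝ} {ℓ : ℝ → ℝ} {α : ℝ}
    (hℓ : RegVary ℓ α) (hRT : RightTail F ℓ) :
    Tendsto (fun x => (rtail F (2 * x))⁻¹ / (rtail F x)⁻¹) atTop (nhds (2 ^ α)) := by
  have h2 : Tendsto (fun x : ℝ => 2 * x) atTop atTop :=
    tendsto_id.const_mul_atTop two_pos
  have := ((Tendsto.comp hRT h2).inv₀ one_ne_zero).mul (hRT.mul (hℓ.2 2 two_pos))
  simp only [inv_one, one_mul] at this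
  refine this.congr' ?_
  filter_upwards [eventually_gt_atTop 0] with x hx
  have h1 := (hℓ.1 x hx).ne'
  have h3 := (hℓ.1 (2 * x) (by positivity)).ne'
  simp only [Function.comp_apply, mul_inv, div_eq_mul_inv, inv_inv]
  field_simp

/-- The local bound on `F` coming from a bound on `ω`. -/
theorem exists_window_bound {F : Measure ℝ} [IsProbabilityMeasure F] {h : ℝ} {M : ℝ → ℝ}
    (hF : ∀ x, 0 < rtail F x) (hM : ∀ x > 0, 0 < M x)
    (hω : (fun x => omegaFn F h x) =O[atTop] fun x => x / M x) :
    ∃ C > 0, ∃ X > 0, ∀ s ≥ X,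
      (F (Ioc s (s + h))).toReal ≤ C * (M s * (rtail F s)⁻¹)⁻¹ := by
  obtain ⟨C, hC, hb⟩ := hω.exists_pos
  obtain ⟨X, hX⟩ := eventually_atTop.1 hb.bound
  refine ⟨C, hC, max X 1, by positivity, fun s hs => ?_⟩
  have hs0 : 0 < s := lt_of_lt_of_le one_pos ((le_max_right X 1).trans hs)
  have hMs := hM s hs0
  have hFs := hF s
  have h1 : omegaFn F h s ≤ C * ‖s / M s‖ :=
    (Real.le_norm_self _).trans (hX s ((le_max_left X 1).trans hs))
  rw [Real.norm_of_nonneg (by positivity), omegaFn, div_le_iff₀ hFs] at h1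
  refine le_of_mul_le_mul_left (h1.trans_eq ?_) hs0
  rw [mul_inv, inv_inv]
  ring

/-- A window bound with rate `M` forces `M` to grow at most linearly, since `F` has a regularly
varying tail of negative exponent. -/
theorem exists_le_mul_of_window_bound {F : Measure ℝ} [IsProbabilityMeasure F] {h α C X : ℝ}
    {M : ℝ → ℝ} (hh : 0 < h) (hα : 0 < α) (hF : ∀ x, 0 < rtail F x) (hM : ∀ x > 0, 0 < M x)
    (hMmono : MonotoneOn M (Ioi 0)) (hC : 0 < C)
    (hratio : Tendsto (fun x => (rtail F (2 * x))⁻¹ / (rtail F x)⁻¹) atTop (nhds (2 ^ α)))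
    (hwin : ∀ s ≥ X, (F (Ioc s (s + h))).toReal ≤ C * (M s * (rtail F s)⁻¹)⁻¹) :
    ∃ D > 0, ∀ᶠ x in atTop, M x ≤ D * x := by
  obtain ⟨b, hb1, hb⟩ := exists_between (Real.one_lt_rpow one_lt_two hα)
  have hb0 : 0 < b := one_pos.trans hb1
  have hc : 0 < 1 - b⁻¹ := sub_pos.2 (inv_lt_one_of_one_lt₀ hb1)
  refine ⟨(1 / h + 1) * C / (1 - b⁻¹), by positivity, ?_⟩
  filter_upwards [hratio.eventually (lt_mem_nhds hb), eventually_ge_atTop X,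
    eventually_ge_atTop 1] with x hx hXx hx1
  have hx0 : 0 < x := by linarith
  have hFx := hF x
  have hF2 := hF (2 * x)
  have hMx := hM x hx0
  have hdrop : (1 - b⁻¹) * rtail F x ≤ rtail F x - rtail F (2 * x) := by
    rw [div_inv_eq_mul, ← div_eq_inv_mul, lt_div_iff₀ hF2] at hx
    have : rtail F (2 * x) ≤ b⁻¹ * rtail F x := by
      rw [← div_eq_inv_mul, le_div_iff₀ hb0]; linarith
    linarith
  have hIoc : rtail F x - rtail F (2 * x) = F.real (Ioc x (2 * x)) := by
    have : Ioi x = Ioc x (2 * x) ∪ Ioi (2 * x) := (Ioc_union_Ioi_eq_Ioi (by linarith)).symm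
    have h2 := measureReal_union (μ := F) (s₁ := Ioc x (2 * x)) (s₂ := Ioi (2 * x))
      (Set.disjoint_left.2 fun a ha ha' => absurd ha.2 (not_le.2 ha')) measurableSet_Ioi
    rw [← this] at h2
    exact sub_eq_iff_eq_add.2 h2
  have hcover : Ioc x (2 * x) ⊆ ⋃ k ∈ Finset.range ⌈x / h⌉₊, Ioc (x + k * h) (x + k * h + h) := by
    intro y hy
    have hpos : 0 < (y - x) / h := div_pos (by linarith [hy.1]) hh
    have hle : (y - x) / h ≤ x / h := by gcongr; linarith [hy.2]
    have hceil : 0 < ⌈(y - x) / h⌉₊ := Nat.ceil_pos.2 hpos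
    obtain ⟨k, hk⟩ := Nat.exists_eq_succ_of_ne_zero hceil.ne'
    have h1 : (k : ℝ) < (y - x) / h := Nat.lt_ceil.1 (by omega)
    have h2 : (y - x) / h ≤ k + 1 := by
      have := Nat.le_ceil ((y - x) / h); rw [hk] at this; exact_mod_cast this
    have h3 : ⌈(y - x) / h⌉₊ ≤ ⌈x / h⌉₊ := Nat.ceil_mono hle
    rw [lt_div_iff₀ hh] at h1
    rw [div_le_iff₀ hh] at h2
    simp only [mem_iUnion, Finset.mem_range]
    exact ⟨k, by omega, by linarith, by linarith⟩
  have hsum : F.real (Ioc x (2 * x)) ≤ ⌈x / h⌉₊ * (C * (M x * (rtail F x)⁻¹)⁻¹) := by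
    refine (measureReal_mono hcover (measure_ne_top _ _)).trans
      ((measureReal_biUnion_finset_le _ _).trans ?_)
    have hB : (⌈x / h⌉₊ : ℝ) * (C * (M x * (rtail F x)⁻¹)⁻¹) =
        ∑ _k ∈ Finset.range ⌈x / h⌉₊, C * (M x * (rtail F x)⁻¹)⁻¹ := by simp
    rw [hB]
    refine Finset.sum_le_sum fun k _ => ?_
    have hk : x ≤ x + k * h := le_add_of_nonneg_right (by positivity)
    refine (hwin _ (hXx.trans hk)).trans ?_
    have hFk := hF (x + k * h)
    have hMk := hM (x + k * h) (hx0.trans_le hk)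
    gcongr
    · exact hMmono hx0 (hx0.trans_le hk) hk
    · exact rtail_antitone F hk
  have hceil : (⌈x / h⌉₊ : ℝ) ≤ (1 / h + 1) * x := by
    refine (Nat.ceil_lt_add_one (by positivity)).le.trans ?_
    rw [add_mul, one_div_mul_eq_div]; linarith
  have hmain : (1 - b⁻¹) * rtail F x ≤ (1 / h + 1) * x * (C * (M x * (rtail F x)⁻¹)⁻¹) :=
    hdrop.trans (hIoc.le.trans (hsum.trans (by gcongr)))
  rw [div_mul_eq_mul_div, le_div_iff₀ hc]
  rw [mul_inv, inv_inv] at hmain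
  have := mul_le_mul_of_nonneg_right hmain (div_pos hMx hFx).le
  calc M x * (1 - b⁻¹) = (1 - b⁻¹) * rtail F x * (M x / rtail F x) := by field_simp
    _ ≤ _ := this
    _ = _ := by field_simp

/-- Karamata-type comparison of the tail at `y ≤ z` with the tail at `z`. -/
theorem exists_rtail_le {F : Measure ℝ} [IsProbabilityMeasure F] {α ρ : ℝ}
    (hF : ∀ x, 0 < rtail F x) (hρ : 0 < ρ) (hαρ : α < ρ)
    (hratio : Tendsto (fun x => (rtail F (2 * x))⁻¹ / (rtail F x)⁻¹) atTop (nhds (2 ^ α))) :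
    ∃ C > 0, ∃ X > 0, ∀ y z, 0 < y → y ≤ z → X ≤ z →
      rtail F y ≤ C * rtail F z * (z / y) ^ ρ := by
  obtain ⟨C, hC, X, hX, hb⟩ := exists_potter_bound (f := fun x => (rtail F x)⁻¹)
    (fun x _ y _ hxy => inv_anti₀ (hF y) (rtail_antitone F hxy))
    (fun x _ => inv_pos.2 (hF x)) hρ hαρ hratio
  have key : ∀ y z, X ≤ y → y ≤ z → rtail F y ≤ C * rtail F z * (z / y) ^ ρ := by
    intro y z hy hyz
    have hFy := hF y
    have hFz := hF z
    have h1 := mul_le_mul_of_nonneg_right (hb y z hy hyz) (mul_pos hFy hFz).le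
    calc rtail F y = (rtail F z)⁻¹ * (rtail F y * rtail F z) := by field_simp
      _ ≤ _ := h1
      _ = _ := by field_simp
  have hFX := hF X
  refine ⟨C * (rtail F X)⁻¹, by positivity, X, hX, fun y z hy hyz hXz => ?_⟩
  have hz : 0 < z := hy.trans_le hyz
  have hFz := hF z
  have hone : 1 ≤ (rtail F X)⁻¹ := (one_le_inv₀ hFX).2 (rtail_le_one F X)
  rcases le_total X y with h | h
  · refine (key y z h hyz).trans ?_
    gcongr
    exact le_mul_of_one_le_right hC.le hone
  · have h2 := key X z le_rfl hXz
    calc rtail F y ≤ (rtail F X)⁻¹ * rtail F X := by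
          rw [inv_mul_cancel₀ hFX.ne']; exact rtail_le_one F y
      _ ≤ (rtail F X)⁻¹ * (C * rtail F z * (z / X) ^ ρ) := by gcongr
      _ ≤ (rtail F X)⁻¹ * (C * rtail F z * (z / y) ^ ρ) := by gcongr
      _ = _ := by ring


set_option maxHeartbeats 400000 in
/-- Proposition 1.4, part 1: a priori lower bound on the
cut-off `L`, logarithmic-growth case. -/
theorem L_prior_one
    (F : Measure ℝ) [IsProbabilityMeasure F] (α h : ℝ) (ℓ : ℝ → ℝ)
    (hα : α ∈ Set.Ioc (0:ℝ) (1/2)) (hℓ : RegVary ℓ α)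
    (hRT : RightTail F ℓ) (hspan : SpanOK F h)
    (β : ℝ) (hβ : 1 - 2 * α ≤ β ∧ β ≤ 1)
    (M : ℝ → ℝ) (hMmono : MonotoneOn M (Set.Ioi 0)) (hMreg : RegVary M β)
    (hω : (fun x => omegaFn F h x) =O[atTop] fun x => x / M x)
    (hMo : (fun x => x / M x) =o[atTop] fun x => ℓ x ^ 2)
    (γ : ℝ) (hγ : α + β < γ)
    (hg0 : (fun x => Real.log x ^ γ) =O[atTop] fun x => ℓ x * Real.sqrt (M x / x)) :
    ∀ θ > (0:ℝ), ∀ L : ℝ → ℝ, MonotoneOn L (Set.Ioi 0) → RegVaryAny L →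
      ((fun x => L x) =O[atTop]
        fun x => ℓ x * Real.sqrt (M x / x) / Real.log x ^ γ) →
      Tendsto (fun x => (x / ℓ x) * ∑ n ∈ Finset.range ⌈L x⌉₊,
          sSup ((fun t => ((convPow F n) (Set.Ioc t (t + h))).toReal) ''
            Set.Ici (θ * x)))
        atTop (nhds 0) := by
  intro θ hθ L _ hLreg hLO
  obtain ⟨κ, hLpos, -⟩ := hLreg
  have hh : 0 < h := hspan.1
  have hα0 : 0 < α := hα.1
  have hα2 : α ≤ 1 / 2 := hα.2
  have hγ0 : 1 / 2 < γ := by linarith [hβ.1]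
  have hF := hRT.rtail_pos
  have hratio := hRT.tendsto_inv_rtail_ratio hℓ
  obtain ⟨C₁, hC₁, X₁, hX₁, hwin⟩ := exists_window_bound hF hMreg.1 hω
  obtain ⟨D, hD, hMD⟩ :=
    exists_le_mul_of_window_bound hh hα0 hF hMreg.1 hMmono hC₁ hratio hwin
  set Q : ℝ → ℝ := fun s => M s * (rtail F s)⁻¹ with hQ
  have hQpos : ∀ s > 0, 0 < Q s := fun s hs => mul_pos (hMreg.1 s hs) (inv_pos.2 (hF s))
  have hQmono : MonotoneOn Q (Ioi 0) := fun x hx y hy hxy =>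
    mul_le_mul (hMmono hx hy hxy) (inv_anti₀ (hF y) (rtail_antitone F hxy))
      (inv_pos.2 (hF x)).le (hMreg.1 y hy).le
  have hQratio : Tendsto (fun x => Q (2 * x) / Q x) atTop (nhds (2 ^ (α + β))) := by
    rw [add_comm, Real.rpow_add two_pos]
    refine ((hMreg.2 2 two_pos).mul hratio).congr fun x => ?_
    rw [hQ, mul_div_mul_comm]
  obtain ⟨C₂, hC₂, X₂, hX₂, hQle⟩ :=
    exists_potter_bound hQmono hQpos (show 0 < γ by linarith) hγ hQratio
  obtain ⟨ρ, hαρ, hρ⟩ := exists_between (show α < min γ 1 from lt_min (by linarith) (by linarith))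
  have hργ : ρ < γ := hρ.trans_le (min_le_left _ _)
  have hρ1 : ρ < 1 := hρ.trans_le (min_le_right _ _)
  obtain ⟨C₃, hC₃, X₃, hX₃, htail⟩ := exists_rtail_le hF (hα0.trans hαρ) hαρ hratio
  obtain ⟨C₅, hC₅, hLb⟩ := hLO.exists_pos
  set K : ℝ := 2 / θ with hK
  have hK0 : 0 < K := by positivity
  obtain ⟨E, hE⟩ : ∃ E : ℝ,
      E = Real.exp (Real.exp K * K / (1 - ρ) * (2 * C₅ * Real.sqrt D * C₃ ^ 2)) := ⟨_, rfl⟩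
  have hE0 : 0 < E := hE ▸ Real.exp_pos _
  have h1ρ : 0 < 1 - ρ := by linarith
  have hzlim : Tendsto (fun x : ℝ => x / Real.log x) atTop atTop := by
    have h0 : Tendsto (fun x : ℝ => Real.log x / x) atTop (nhdsWithin 0 (Ioi 0)) := by
      refine tendsto_nhdsWithin_iff.2 ⟨Real.isLittleO_log_id_atTop.tendsto_div_nhds_zero, ?_⟩
      filter_upwards [eventually_gt_atTop 1] with x hx
      exact div_pos (Real.log_pos hx) (by linarith)
    exact h0.inv_tendsto_nhdsGT_zero.congr fun x => inv_div _ _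
  have hbound : ∀ᶠ x in atTop, (x / ℓ x) * ∑ n ∈ Finset.range ⌈L x⌉₊,
      sSup ((fun t => ((convPow F n) (Set.Ioc t (t + h))).toReal) '' Set.Ici (θ * x)) ≤
      2 * C₅ ^ 2 * C₁ * C₂ * 2 ^ γ * Real.log x ^ (-γ) + (C₅ * Real.sqrt D + 2) * E * x⁻¹ := by
    filter_upwards [eventually_gt_atTop 0, hMD, hLb.bound,
      Real.tendsto_log_atTop.eventually_ge_atTop 1,
      hRT.eventually (lt_mem_nhds (show (1 / 2 : ℝ) < 1 by norm_num)),
      hRT.eventually (gt_mem_nhds (show (1 : ℝ) < 2 by norm_num)),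
      hzlim.eventually_ge_atTop (2 * h), hzlim.eventually_ge_atTop (2 * X₁),
      hzlim.eventually_ge_atTop (2 * X₂), hzlim.eventually_ge_atTop X₃]
      with x hx0 hMx hLx hl1 hlow hupp hzh hz1 hz2 hz3
    set l := Real.log x with hl
    have hl0 : 0 < l := by linarith
    set z := x / l with hz
    have hz0 : 0 < z := by positivity
    have hℓx := hℓ.1 x hx0
    have hMx0 := hMreg.1 x hx0
    have hLx0 := hLpos x hx0
    have hFx := hF x
    have hFz := hF z
    have hlγ : 0 < l ^ γ := Real.rpow_pos_of_pos hl0 γ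
    have hLx' : L x ≤ C₅ * (ℓ x * Real.sqrt (M x / x) / l ^ γ) := by
      rwa [Real.norm_of_nonneg hLx0.le, Real.norm_of_nonneg (by positivity)] at hLx
    have hsqrt : Real.sqrt (M x / x) ≤ Real.sqrt D :=
      Real.sqrt_le_sqrt ((div_le_iff₀ hx0).2 hMx)
    have hLγ : L x * l ^ γ ≤ C₅ * Real.sqrt D * ℓ x := by
      calc L x * l ^ γ ≤ C₅ * (ℓ x * Real.sqrt (M x / x) / l ^ γ) * l ^ γ := by gcongr
        _ = C₅ * Real.sqrt (M x / x) * ℓ x := by field_simp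
        _ ≤ _ := by gcongr
    have hxz : x / z = l := by rw [hz]; field_simp
    have hzx : z ≤ x := div_le_self hx0.le hl1
    set p : ℝ := C₁ * (Q (z / 2))⁻¹ with hp
    have hQz : 0 < Q (z / 2) := hQpos _ (by positivity)
    have hp0 : 0 ≤ p := by positivity
    have hpwin : ∀ s, (F (Ioi z ∩ Ioc s (s + h))).toReal ≤ p := by
      intro s
      rcases lt_or_ge s (z / 2) with hs | hs
      · have : Ioi z ∩ Ioc s (s + h) = ∅ := by
          refine eq_empty_of_forall_notMem fun y hy => ?_
          have h1 : z < y := hy.1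
          have h2 : y ≤ s + h := hy.2.2
          linarith
        rw [this]; simpa using hp0
      · refine (ENNReal.toReal_mono (measure_ne_top _ _) (measure_mono inter_subset_right)).trans
          ((hwin s (by linarith)).trans ?_)
        rw [hp]
        have hs0 : 0 < s := by linarith
        gcongr
        exact hQmono (show 0 < z / 2 by positivity) hs0 hs
    have hple : p ≤ C₁ * C₂ * 2 ^ γ * l ^ γ * (2 / (M x * ℓ x)) := by
      have h1 : Q x ≤ C₂ * (x / (z / 2)) ^ γ * Q (z / 2) :=
        hQle (z / 2) x (by linarith) (by linarith)
      have h2 : x / (z / 2) = 2 * l := by rw [← hxz]; field_simp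
      rw [h2, Real.mul_rpow two_pos.le hl0.le] at h1
      have hQx : 0 < Q x := hQpos x hx0
      have h3 : (Q (z / 2))⁻¹ ≤ C₂ * (2 ^ γ * l ^ γ) * (Q x)⁻¹ := by
        rw [← div_eq_mul_inv, le_div_iff₀ hQx, inv_mul_le_iff₀ hQz]
        linarith
      have h4 : (Q x)⁻¹ ≤ 2 / (M x * ℓ x) := by
        rw [hQ]; dsimp only
        rw [mul_inv, inv_inv, le_div_iff₀ (by positivity)]
        calc (M x)⁻¹ * rtail F x * (M x * ℓ x) = rtail F x * ℓ x := by field_simp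
          _ ≤ 2 := hupp.le
      calc p ≤ C₁ * (C₂ * (2 ^ γ * l ^ γ) * (2 / (M x * ℓ x))) := by
            rw [hp]; gcongr; exact h3.trans (by gcongr)
        _ = _ := by ring
    have hLtail : L x * (C₃ * rtail F z) ≤ 2 * C₅ * Real.sqrt D * C₃ ^ 2 := by
      have h1 : rtail F z ≤ C₃ * rtail F x * l ^ ρ := by
        rw [← hxz]; exact htail z x hz0 hzx (hz3.trans hzx)
      have h2 : l ^ ρ ≤ l ^ γ := Real.rpow_le_rpow_of_exponent_le hl1 hργ.le
      calc L x * (C₃ * rtail F z) ≤ L x * (C₃ * (C₃ * rtail F x * l ^ γ)) := by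
            gcongr
            exact h1.trans (by gcongr)
        _ = C₃ ^ 2 * rtail F x * (L x * l ^ γ) := by ring
        _ ≤ C₃ ^ 2 * rtail F x * (C₅ * Real.sqrt D * ℓ x) := by gcongr
        _ = C₅ * Real.sqrt D * C₃ ^ 2 * (rtail F x * ℓ x) := by ring
        _ ≤ C₅ * Real.sqrt D * C₃ ^ 2 * 2 := by gcongr
        _ = _ := by ring
    have hsup : ∀ n : ℕ, (n : ℝ) < L x →
        sSup ((fun t => ((convPow F n) (Set.Ioc t (t + h))).toReal) '' Set.Ici (θ * x)) ≤
          n * p + x⁻¹ ^ 2 * E := by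
      intro n hn
      refine csSup_le (nonempty_Ici.image _) ?_
      rintro _ ⟨t, ht, rfl⟩
      refine (convPow_Ioc_toReal_le F hz0 hK0.le hρ1 (A := C₃ * rtail F z) (by positivity) hp0
        (fun y hy hyz => htail y z hy hyz hz3) hpwin n t).trans ?_
      have hexp : Real.exp (-(K / z * t)) ≤ x⁻¹ ^ 2 := by
        have h1 : K / z * (θ * x) ≤ K / z * t := by gcongr; exact ht
        have h2 : K / z * (θ * x) = 2 * l := by rw [← hxz, hK]; field_simp
        calc Real.exp (-(K / z * t)) ≤ Real.exp (-(2 * l)) := Real.exp_le_exp.2 (by linarith)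
          _ = x⁻¹ ^ 2 := by
            rw [Real.exp_neg, two_mul, Real.exp_add, hl, Real.exp_log hx0, inv_pow, sq]
      gcongr
      rw [hE, mul_left_comm]
      refine Real.exp_le_exp.2 ?_
      exact mul_le_mul_of_nonneg_left
        ((mul_le_mul_of_nonneg_right hn.le (by positivity)).trans hLtail) (by positivity)
    have hsum := sum_range_ceil_le hLx0.le hp0 (q := x⁻¹ ^ 2 * E) (by positivity) hsup
    refine (mul_le_mul_of_nonneg_left hsum (by positivity)).trans ?_
    rw [mul_add]
    refine add_le_add ?_ ?_
    · calc x / ℓ x * (L x ^ 2 * p) ≤ x / ℓ x * ((C₅ * (ℓ x * Real.sqrt (M x / x) / l ^ γ)) ^ 2 *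
            (C₁ * C₂ * 2 ^ γ * l ^ γ * (2 / (M x * ℓ x)))) := by gcongr
        _ = x / ℓ x * ((C₅ * (ℓ x / l ^ γ)) ^ 2 * Real.sqrt (M x / x) ^ 2 *
            (C₁ * C₂ * 2 ^ γ * l ^ γ * (2 / (M x * ℓ x)))) := by ring
        _ = _ := by
            rw [Real.sq_sqrt (by positivity), Real.rpow_neg hl0.le]
            field_simp
    · have hone : 1 ≤ 2 * ℓ x := by nlinarith [rtail_le_one F x]
      have hLℓ : L x ≤ C₅ * Real.sqrt D * ℓ x := by
        refine le_trans ?_ hLγ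
        exact le_mul_of_one_le_right hLx0.le (Real.one_le_rpow hl1 (by linarith))
      calc x / ℓ x * ((L x + 1) * (x⁻¹ ^ 2 * E))
          ≤ x / ℓ x * ((C₅ * Real.sqrt D * ℓ x + 2 * ℓ x) * (x⁻¹ ^ 2 * E)) := by gcongr
        _ = _ := by field_simp
  have hzero : Tendsto (fun x : ℝ => 2 * C₅ ^ 2 * C₁ * C₂ * 2 ^ γ * Real.log x ^ (-γ) +
      (C₅ * Real.sqrt D + 2) * E * x⁻¹) atTop (nhds 0) := by
    have h1 := ((tendsto_rpow_neg_atTop (show 0 < γ by linarith)).comp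
      Real.tendsto_log_atTop).const_mul (2 * C₅ ^ 2 * C₁ * C₂ * 2 ^ γ)
    have h2 := (tendsto_inv_atTop_zero (𝕜 := ℝ)).const_mul ((C₅ * Real.sqrt D + 2) * E)
    simpa using h1.add h2
  refine tendsto_of_tendsto_of_tendsto_of_le_of_le' tendsto_const_nhds hzero ?_ hbound
  filter_upwards [eventually_gt_atTop 0] with x hx
  refine mul_nonneg (div_nonneg hx.le (hℓ.1 x hx).le) (Finset.sum_nonneg fun n _ => ?_)
  refine Real.sSup_nonneg ?_
  rintro _ ⟨t, -, rfl⟩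
  exact ENNReal.toReal_nonneg
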